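/- Main theorem (part ii): Let k be an algebraically closed field of characteristic zero, Λ a nonempty finite subset of k, f = ∏_{λ∈Λ}(t−λ)^{m(λ)} with all m(λ) ≥ 1, and V = ker 𝓛 where 𝓛 = (L_1,…,L_d) : k[t] → k^d, each L_i = S_0 ∘ P_0^{(i)}(∂) + Σ_{λ∈Λ, λ≠0} S_λ ∘ P_λ^{(i)}(D) with P_λ^{(i)} ∈ k[T] of degree < m(λ) (P_0 term omitted if 0 ∉ Λ), and for every λ ∈ Λ the maximum over i of the degrees of P_λ^{(i)} equals m(λ)−1. Then V is a Mathieu–Zhao space of k[t] if and only if for every nonempty subset Λ' ⊆ Λ there exists an index i with Σ_{λ∈Λ'} P_λ^{(i)}(0) ≠ 0. -/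

import Mathlib

open Polynomial

/-- `V` is a Mathieu–Zhao space of the commutative ring `A`: for every `a` in the radical
of `V` (i.e. `a ^ m ∈ V` for all sufficiently large `m`) and every `b ∈ A`, there is `N ≥ 1`
such that `b * a ^ m ∈ V` for all `m ≥ N`. -/
def IsMZ {A : Type*} [CommRing A] (V : Set A) : Prop :=
  ∀ a : A, (∃ N : ℕ, 1 ≤ N ∧ ∀ m : ℕ, N ≤ m → a ^ m ∈ V) →
    ∀ b : A, ∃ N : ℕ, 1 ≤ N ∧ ∀ m : ℕ, N ≤ m → b * a ^ m ∈ V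

/-- The operator `D = t·d/dt` on `k[t]`. -/
noncomputable def Dop {k : Type*} [Field k] : Polynomial k → Polynomial k :=
  fun g => X * derivative g

/-- The operator `∂ = d/dt` on `k[t]`. -/
noncomputable def delOp {k : Type*} [Field k] : Polynomial k → Polynomial k :=
  fun g => derivative g

/-- For `P(T) = Σ cᵢ Tⁱ` and an operator `T` on `k[t]`, `opEval P T g = Σ cᵢ Tⁱ(g)`,
i.e. the operator `P(T)` applied to `g`. -/
noncomputable def opEval {k : Type*} [Field k] (P : Polynomial k)
    (T : Polynomial k → Polynomial k) (g : Polynomial k) : Polynomial k :=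
  ∑ i ∈ Finset.range (P.natDegree + 1), P.coeff i • T^[i] g

open scoped Classical

/-! Let `V` be the kernel of `∑_{l ∈ Λ} φ l`, where each linear map `φ l` on a commutative
`k`-algebra `A` vanishes on a power `(ker (χ l)) ^ n`, for distinct characters `χ l : A → k`. By the
Chinese remainder theorem, residues modulo these powers can be prescribed independently.

If `V` is a Mathieu–Zhao space and `∑_{l ∈ Λ'} φ l 1 = 0`, an element with residue `1` on `Λ'` and
`0` on the rest of `Λ` lies in the radical of `V`; multiplying its powers by an element `b` with
nonzero residue at a single `l ∈ Λ'` recovers `φ l b`, which need not vanish. Conversely, if `a`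
lies in the radical and takes a nonzero value `μ` on `Λ`, take a polynomial `p` divisible by a high
power of `X`, congruent to `1` modulo a power of `X - μ` and to `0` modulo powers of `X - ν` for the
other values `ν` of `a`. Then `p(a) ∈ V`, although `∑ φ l (p(a)) = ∑_{χ l a = μ} φ l 1`. So every
`a` in the radical lies in all `ker (χ l)`, and `b * a ^ r ∈ V` for `r ≥ n`.

The functionals `χ ∘ P(δ)`, with `δ` a derivation, fit this setting: they vanish on
`(ker χ) ^ (deg P + 1)`, take the value `P(0)` at `1`, and are detected on `x ^ deg P` for
`x ∈ ker χ`, by `χ (δ^n (x ^ n)) = n! χ(δ x) ^ n`. -/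

lemma aeval_injective {R A : Type*} [CommSemiring R] [Semiring A] [Algebra R A] :
    Function.Injective (aeval : A → R[X] →ₐ[R] A) := fun a b h ↦ by
  simpa only [aeval_X] using DFunLike.congr_fun h X

lemma aeval_mem_ker_pow {R A B : Type*} [CommRing R] [CommRing A] [CommRing B] [Algebra R A]
    [Algebra R B] (χ : A →ₐ[R] B) (a : A) {n : ℕ} {p : R[X]}
    (hp : p ∈ RingHom.ker (aeval (R := R) (χ a)) ^ n) : aeval a p ∈ RingHom.ker χ ^ n := by
  have hker : RingHom.ker (aeval (R := R) (χ a)) = (RingHom.ker χ).comap (aeval (R := R) a) := by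
    ext q
    simp only [RingHom.mem_ker, Ideal.mem_comap, aeval_algHom_apply]
  exact Ideal.le_comap_pow _ n (hker ▸ hp)

lemma aeval_mem_of_X_pow_dvd {R A : Type*} [CommSemiring R] [Semiring A] [Algebra R A]
    (V : Submodule R A) {a : A} {N : ℕ} (ha : ∀ r, N ≤ r → a ^ r ∈ V) {p : R[X]}
    (hp : X ^ N ∣ p) : aeval a p ∈ V := by
  rw [aeval_eq_sum_range]
  refine V.sum_mem fun r _ ↦ ?_
  rcases lt_or_ge r N with hr | hr
  · simp [X_pow_dvd_iff.1 hp r hr]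
  · exact V.smul_mem _ (ha r hr)

lemma pow_sub_ite_mem {A : Type*} [CommRing A] {I : Ideal A} {c : Prop} [Decidable c] {a : A}
    {r : ℕ} (hr : r ≠ 0) (ha : a - (if c then 1 else 0) ∈ I) :
    a ^ r - (if c then 1 else 0) ∈ I := by
  have hdvd := sub_dvd_pow_sub_pow a (if c then 1 else 0) r
  rw [ite_pow, one_pow, zero_pow hr] at hdvd
  exact Ideal.mem_of_dvd I hdvd ha

section Character

variable {k A : Type*} [Field k] [CommRing A] [Algebra k A]

lemma isCoprime_ker_of_ne {χ ψ : A →ₐ[k] k} (h : χ ≠ ψ) :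
    IsCoprime (RingHom.ker χ) (RingHom.ker ψ) := by
  obtain ⟨x, hx⟩ := DFunLike.ne_iff.1 h
  refine Ideal.isCoprime_iff_exists.2
    ⟨(ψ x - χ x)⁻¹ • (x - algebraMap k A (χ x)), ?_,
      (ψ x - χ x)⁻¹ • (algebraMap k A (ψ x) - x), ?_, ?_⟩
  · simp [RingHom.mem_ker]
  · simp [RingHom.mem_ker]
  · rw [← smul_add, sub_add_sub_comm, add_comm, add_sub_add_right_eq_sub, ← map_sub,
      Algebra.algebraMap_eq_smul_one, smul_smul, inv_mul_cancel₀ (sub_ne_zero.2 hx.symm), one_smul]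

lemma exists_forall_sub_mem_ker_pow {σ : Type*} {Λ : Finset σ} {χ : σ → A →ₐ[k] k}
    (hχ : Set.InjOn χ Λ) (n : ℕ) (g : σ → A) :
    ∃ a, ∀ l ∈ Λ, a - g l ∈ RingHom.ker (χ l) ^ n := by
  obtain ⟨a, ha⟩ := Ideal.exists_forall_sub_mem_ideal (I := fun l : Λ ↦ RingHom.ker (χ l) ^ n)
    (fun l j hlj ↦ (isCoprime_ker_of_ne (hχ.ne l.2 j.2 (Subtype.coe_ne_coe.2 hlj))).pow)
    fun l ↦ g l
  exact ⟨a, fun l hl ↦ ha ⟨l, hl⟩⟩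

lemma exists_X_pow_dvd_and_sub_mem_ker_pow {μ : k} (hμ : μ ≠ 0) (s : Finset k) (N n : ℕ) :
    ∃ p : k[X], X ^ N ∣ p ∧
      ∀ ν ∈ s, p - (if ν = μ then 1 else 0) ∈ RingHom.ker (aeval (R := k) ν) ^ n := by
  obtain ⟨p, hp⟩ := exists_forall_sub_mem_ker_pow (Λ := insert 0 s)
    (aeval_injective (R := k)).injOn (N + n) fun ν ↦ if ν = μ then 1 else 0
  refine ⟨p, ?_, fun ν hν ↦
    Ideal.pow_le_pow_right (Nat.le_add_left n N) (hp ν (Finset.mem_insert_of_mem hν))⟩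
  have hker : RingHom.ker (aeval (R := k) (0 : k)) = Ideal.span {X} := by
    ext q
    rw [RingHom.mem_ker, Ideal.mem_span_singleton, X_dvd_iff, coeff_zero_eq_aeval_zero]
  have hp0 := hp 0 (Finset.mem_insert_self 0 s)
  rw [if_neg hμ.symm, sub_zero, hker, Ideal.span_singleton_pow, Ideal.mem_span_singleton] at hp0
  exact (pow_dvd_pow X (Nat.le_add_right N n)).trans hp0

end Character

section Criterion

variable {k A W σ : Type*} [Field k] [CommRing A] [Algebra k A] [AddCommGroup W] [Module k W]
  {Λ : Finset σ} {χ : σ → A →ₐ[k] k} {φ : σ → A →ₗ[k] W} {n : ℕ}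

lemma sum_apply_of_sub_mem_ker_pow (hφ : ∀ l ∈ Λ, ∀ x ∈ RingHom.ker (χ l) ^ n, φ l x = 0)
    {a : A} {g : σ → A} (h : ∀ l ∈ Λ, a - g l ∈ RingHom.ker (χ l) ^ n) :
    (∑ l ∈ Λ, φ l) a = ∑ l ∈ Λ, φ l (g l) := by
  rw [LinearMap.sum_apply]
  exact Finset.sum_congr rfl fun l hl ↦
    sub_eq_zero.1 ((map_sub (φ l) _ _).symm.trans (hφ l hl _ (h l hl)))

lemma sum_apply_of_sub_ite_mem_ker_pow (hφ : ∀ l ∈ Λ, ∀ x ∈ RingHom.ker (χ l) ^ n, φ l x = 0)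
    {Λ' : Finset σ} (hΛ' : Λ' ⊆ Λ) {a : A}
    (h : ∀ l ∈ Λ, a - (if l ∈ Λ' then 1 else 0) ∈ RingHom.ker (χ l) ^ n) :
    (∑ l ∈ Λ, φ l) a = ∑ l ∈ Λ', φ l 1 := by
  rw [sum_apply_of_sub_mem_ker_pow hφ h]
  simp only [apply_ite, map_zero, Finset.sum_ite_mem, Finset.inter_eq_right.2 hΛ']

lemma sum_apply_one_ne_zero_of_isMZ (hχ : Set.InjOn χ Λ)
    (hφ : ∀ l ∈ Λ, ∀ x ∈ RingHom.ker (χ l) ^ n, φ l x = 0) (hne : ∀ l ∈ Λ, φ l ≠ 0)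
    (hMZ : IsMZ (LinearMap.ker (∑ l ∈ Λ, φ l) : Set A)) {Λ' : Finset σ} (hΛ' : Λ' ⊆ Λ)
    (hΛ'ne : Λ'.Nonempty) : ∑ l ∈ Λ', φ l 1 ≠ 0 := by
  intro hsum
  obtain ⟨l₀, hl₀⟩ := hΛ'ne
  obtain ⟨g, hg⟩ := DFunLike.ne_iff.1 (hne l₀ (hΛ' hl₀))
  obtain ⟨a, ha⟩ := exists_forall_sub_mem_ker_pow hχ n fun l ↦ if l ∈ Λ' then 1 else 0
  obtain ⟨b, hb⟩ := exists_forall_sub_mem_ker_pow hχ n (Pi.single l₀ g)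
  have ha_pow (r : ℕ) (hr : 1 ≤ r) (l) (hl : l ∈ Λ) :
      a ^ r - (if l ∈ Λ' then 1 else 0) ∈ RingHom.ker (χ l) ^ n :=
    pow_sub_ite_mem (Nat.one_le_iff_ne_zero.1 hr) (ha l hl)
  have ha_mem (r : ℕ) (hr : 1 ≤ r) : a ^ r ∈ LinearMap.ker (∑ l ∈ Λ, φ l) :=
    (sum_apply_of_sub_ite_mem_ker_pow hφ hΛ' (ha_pow r hr)).trans hsum
  obtain ⟨N, hN₁, hN⟩ := hMZ a ⟨1, le_rfl, ha_mem⟩ b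
  have hba (l) (hl : l ∈ Λ) :
      b * a ^ N - (Pi.single l₀ g : σ → A) l ∈ RingHom.ker (χ l) ^ n := by
    have hsingle : (Pi.single l₀ g : σ → A) l
        = (Pi.single l₀ g : σ → A) l * (if l ∈ Λ' then 1 else 0) := by
      rcases eq_or_ne l l₀ with rfl | h
      · rw [if_pos hl₀, mul_one]
      · rw [Pi.single_eq_of_ne h, zero_mul]
    rw [hsingle]
    exact Ideal.mul_sub_mul_mem _ (hb l hl) (ha_pow N hN₁ l hl)
  apply hg
  calc φ l₀ g = ∑ l ∈ Λ, φ l ((Pi.single l₀ g : σ → A) l) := by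
        rw [Finset.sum_eq_single_of_mem l₀ (hΛ' hl₀) fun l _ h ↦ by
          rw [Pi.single_eq_of_ne h, map_zero], Pi.single_eq_same]
    _ = (∑ l ∈ Λ, φ l) (b * a ^ N) := (sum_apply_of_sub_mem_ker_pow hφ hba).symm
    _ = 0 := hN N le_rfl

lemma apply_eq_zero_of_pow_mem_ker (hφ : ∀ l ∈ Λ, ∀ x ∈ RingHom.ker (χ l) ^ n, φ l x = 0)
    (hsum : ∀ Λ' ⊆ Λ, Λ'.Nonempty → ∑ l ∈ Λ', φ l 1 ≠ 0) {a : A} {N : ℕ}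
    (ha : ∀ r, N ≤ r → a ^ r ∈ LinearMap.ker (∑ l ∈ Λ, φ l)) {l₀ : σ} (hl₀ : l₀ ∈ Λ) :
    χ l₀ a = 0 := by
  by_contra hμ
  obtain ⟨p, hXp, hp⟩ :=
    exists_X_pow_dvd_and_sub_mem_ker_pow hμ (Λ.image fun l ↦ χ l a) N n
  refine hsum (Λ.filter fun l ↦ χ l a = χ l₀ a) (Finset.filter_subset _ _)
    ⟨l₀, Finset.mem_filter.2 ⟨hl₀, rfl⟩⟩ ?_
  rw [← sum_apply_of_sub_ite_mem_ker_pow hφ (Finset.filter_subset _ _) (a := aeval a p)]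
  · exact aeval_mem_of_X_pow_dvd _ ha hXp
  · intro l hl
    have := aeval_mem_ker_pow (χ l) a (hp (χ l a) (Finset.mem_image_of_mem _ hl))
    simpa [hl, apply_ite (aeval a)] using this

theorem isMZ_ker_sum_iff (hχ : Set.InjOn χ Λ)
    (hφ : ∀ l ∈ Λ, ∀ x ∈ RingHom.ker (χ l) ^ n, φ l x = 0) (hne : ∀ l ∈ Λ, φ l ≠ 0) :
    IsMZ (LinearMap.ker (∑ l ∈ Λ, φ l) : Set A) ↔
      ∀ Λ' ⊆ Λ, Λ'.Nonempty → ∑ l ∈ Λ', φ l 1 ≠ 0 := by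
  refine ⟨fun hMZ Λ' ↦ sum_apply_one_ne_zero_of_isMZ hχ hφ hne hMZ, ?_⟩
  rintro hsum a ⟨N, -, ha⟩ b
  refine ⟨n + 1, Nat.le_add_left 1 n, fun r hr ↦ ?_⟩
  rw [SetLike.mem_coe, LinearMap.mem_ker, LinearMap.sum_apply]
  refine Finset.sum_eq_zero fun l hl ↦ hφ l hl _ (Ideal.mul_mem_left _ b ?_)
  exact Ideal.pow_le_pow_right (Nat.le_of_succ_le hr)
    (Ideal.pow_mem_pow (apply_eq_zero_of_pow_mem_ker hφ hsum ha hl) r)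

end Criterion

section Derivation

variable {R A : Type*} [CommRing R] [CommRing A] [Algebra R A]

lemma derivation_apply_mem_pow (δ : Derivation R A A) (I : Ideal A)
    {n : ℕ} {x : A} (hx : x ∈ I ^ (n + 1)) : δ x ∈ I ^ n := by
  induction n generalizing x with
  | zero => simp
  | succ n ih =>
    rw [pow_succ] at hx
    induction hx using Submodule.mul_induction_on' with
    | mem_mul_mem y hy z hz =>
      rw [δ.leibniz, smul_eq_mul, smul_eq_mul, pow_succ']
      refine add_mem (Ideal.mul_mem_right _ _ (pow_succ' I n ▸ hy)) (Ideal.mul_mem_mul hz (ih hy))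
    | add y _ z _ hy hz => rw [map_add]; exact add_mem hy hz

lemma derivation_iterate_mem_pow (δ : Derivation R A A) (I : Ideal A)
    (n j : ℕ) {x : A} (hx : x ∈ I ^ (n + j)) : δ^[j] x ∈ I ^ n := by
  induction j generalizing x with
  | zero => exact hx
  | succ j ih => exact ih (derivation_apply_mem_pow δ I hx)

lemma apply_derivation_iterate_pow_mul {B : Type*} [CommRing B] [Algebra R B]
    (χ : A →ₐ[R] B) (δ : Derivation R A A) {x : A} (hx : χ x = 0) (n : ℕ) (h : A) :
    χ (δ^[n] (x ^ n * h)) = n.factorial * χ (δ x) ^ n * χ h := by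
  induction n generalizing h with
  | zero => simp
  | succ n ih =>
    have hδ : δ (x ^ (n + 1) * h) = x ^ n * ((n + 1 : ℕ) * δ x * h + x * δ h) := by
      simp only [δ.leibniz, δ.leibniz_pow, smul_eq_mul, nsmul_eq_mul, Nat.add_sub_cancel]
      ring
    rw [Function.iterate_succ_apply, hδ, ih, Nat.factorial_succ]
    simp only [map_add, map_mul, map_natCast, hx, Nat.cast_mul]
    ring

end Derivation

section DerivationFunctional

variable {k A : Type*} [Field k] [CommRing A] [Algebra k A]

/-- The linear functional `χ ∘ P(δ)` attached to a character `χ`, a derivation `δ` and a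
polynomial `P`; for `A = k[t]` and `χ = S_λ` these are the summands of the operators `L_i`. -/
noncomputable def derivationFunctional (χ : A →ₐ[k] k) (δ : Derivation k A A) (P : k[X]) :
    A →ₗ[k] k :=
  χ.toLinearMap ∘ₗ aeval (δ.toLinearMap : Module.End k A) P

variable (χ : A →ₐ[k] k) (δ : Derivation k A A) (P : k[X])

lemma derivationFunctional_apply (g : A) :
    derivationFunctional χ δ P g
      = ∑ j ∈ Finset.range (P.natDegree + 1), P.coeff j * χ (δ^[j] g) := by
  simp [derivationFunctional, aeval_eq_sum_range, Module.End.pow_apply]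

lemma derivationFunctional_eq_zero_of_mem_ker_pow {n : ℕ} (hP : P.natDegree < n) {g : A}
    (hg : g ∈ RingHom.ker χ ^ n) : derivationFunctional χ δ P g = 0 := by
  rw [derivationFunctional_apply]
  refine Finset.sum_eq_zero fun j hj ↦ mul_eq_zero_of_right _ ?_
  rw [Finset.mem_range] at hj
  refine RingHom.mem_ker.1 (pow_one (RingHom.ker χ) ▸ derivation_iterate_mem_pow δ _ 1 j ?_)
  exact Ideal.pow_le_pow_right (by lia) hg

lemma derivationFunctional_pow_natDegree {x : A} (hx : χ x = 0) :
    derivationFunctional χ δ P (x ^ P.natDegree)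
      = P.leadingCoeff * (P.natDegree.factorial * χ (δ x) ^ P.natDegree) := by
  rw [derivationFunctional_apply, Finset.sum_range_succ, Finset.sum_eq_zero, zero_add]
  · simpa using congrArg (P.leadingCoeff * ·) (apply_derivation_iterate_pow_mul χ δ hx _ 1)
  · intro j hj
    obtain ⟨r, hr⟩ := Nat.exists_eq_add_of_lt (Finset.mem_range.1 hj)
    rw [hr, add_assoc, pow_add, apply_derivation_iterate_pow_mul χ δ hx]
    simp [hx]

lemma derivationFunctional_one : derivationFunctional χ δ P 1 = P.eval 0 := by
  rw [derivationFunctional, LinearMap.comp_apply, ← divX_mul_X_add P]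
  simp [Algebra.algebraMap_eq_smul_one]

variable {χ δ P}

lemma derivationFunctional_ne_zero (hδ : ∃ x, χ (δ x) ≠ 0) (hP : P ≠ 0)
    (hfact : (P.natDegree.factorial : k) ≠ 0) : derivationFunctional χ δ P ≠ 0 := by
  obtain ⟨x, hx⟩ := hδ
  have hx₀ : χ (x - algebraMap k A (χ x)) = 0 := by simp
  refine DFunLike.ne_iff.2 ⟨(x - algebraMap k A (χ x)) ^ P.natDegree, ?_⟩
  rw [derivationFunctional_pow_natDegree χ δ P hx₀, map_sub, δ.map_algebraMap, sub_zero]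
  exact mul_ne_zero (leadingCoeff_ne_zero.2 hP) (mul_ne_zero hfact (pow_ne_zero _ hx))

theorem isMZ_derivationFunctional_iff {ι σ : Type*} [Finite ι] {Λ : Finset σ}
    {χ : σ → A →ₐ[k] k} (hχ : Set.InjOn χ Λ) {δ : σ → Derivation k A A}
    (hδ : ∀ l ∈ Λ, ∃ x, χ l (δ l x) ≠ 0) {P : ι → σ → k[X]}
    (hP : ∀ l ∈ Λ, ∃ i, P i l ≠ 0 ∧ ((P i l).natDegree.factorial : k) ≠ 0) :
    IsMZ {g | ∀ i, ∑ l ∈ Λ, derivationFunctional (χ l) (δ l) (P i l) g = 0} ↔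
      ∀ Λ' ⊆ Λ, Λ'.Nonempty → ∃ i, ∑ l ∈ Λ', (P i l).eval 0 ≠ 0 := by
  let φ (l : σ) : A →ₗ[k] ι → k :=
    LinearMap.pi fun i ↦ derivationFunctional (χ l) (δ l) (P i l)
  obtain ⟨n, hn⟩ : ∃ n, ∀ i, ∀ l ∈ Λ, (P i l).natDegree < n := by
    cases nonempty_fintype ι
    refine ⟨(Finset.univ ×ˢ Λ).sup (fun q ↦ (P q.1 q.2).natDegree) + 1, fun i l hl ↦ ?_⟩
    exact Nat.lt_succ_of_le (Finset.le_sup (f := fun q : ι × σ ↦ (P q.1 q.2).natDegree)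
      (Finset.mk_mem_product (Finset.mem_univ i) hl))
  have hφ : ∀ l ∈ Λ, ∀ x ∈ RingHom.ker (χ l) ^ n, φ l x = 0 := fun l hl x hx ↦
    funext fun i ↦ derivationFunctional_eq_zero_of_mem_ker_pow _ _ _ (hn i l hl) hx
  have hne : ∀ l ∈ Λ, φ l ≠ 0 := fun l hl h ↦ by
    obtain ⟨i, hi₀, hi⟩ := hP l hl
    exact derivationFunctional_ne_zero (hδ l hl) hi₀ hi
      (LinearMap.ext fun g ↦ congrFun (DFunLike.congr_fun h g) i)
  have hker : {g | ∀ i, ∑ l ∈ Λ, derivationFunctional (χ l) (δ l) (P i l) g = 0}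
      = (LinearMap.ker (∑ l ∈ Λ, φ l) : Set A) := by
    ext g
    simp [φ, funext_iff]
  rw [hker, isMZ_ker_sum_iff hχ hφ hne]
  simp only [φ, ne_eq, funext_iff, Finset.sum_apply, LinearMap.pi_apply,
    derivationFunctional_one, Pi.zero_apply, not_forall]

end DerivationFunctional

lemma eval_opEval_eq_derivationFunctional {k : Type*} [Field k] (l : k)
    (δ : Derivation k k[X] k[X]) (P g : k[X]) :
    eval l (opEval P δ g) = derivationFunctional (aeval l) δ P g := by
  simp [opEval, derivationFunctional_apply, eval_finsetSum]

lemma exists_derivation_eq_delOp_or_Dop {k : Type*} [Field k] (l : k) :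
    ∃ δ : Derivation k k[X] k[X],
      ⇑δ = (if l = 0 then delOp else Dop) ∧ aeval (R := k) l (δ X) ≠ 0 := by
  rcases eq_or_ne l 0 with rfl | hl
  · exact ⟨mkDerivation k 1, by ext1 g; simp [delOp, mkDerivation_apply], by simp⟩
  · exact ⟨mkDerivation k X, by ext1 g; simp [hl, Dop, mkDerivation_apply, mul_comm], by simpa⟩

theorem stmt_14_general {k ι : Type*} [Field k] [Finite ι] (Λ : Finset k) (P : ι → k → k[X])
    (hP : ∀ l ∈ Λ, ∃ i, P i l ≠ 0 ∧ ((P i l).natDegree.factorial : k) ≠ 0) :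
    IsMZ {g : k[X] | ∀ i,
        ∑ l ∈ Λ, eval l (opEval (P i l) (if l = 0 then delOp else Dop) g) = 0} ↔
      ∀ Λ' ⊆ Λ, Λ'.Nonempty → ∃ i, ∑ l ∈ Λ', (P i l).eval 0 ≠ 0 := by
  choose δ hδ hδX using exists_derivation_eq_delOp_or_Dop (k := k)
  simp only [← hδ, eval_opEval_eq_derivationFunctional]
  exact isMZ_derivationFunctional_iff aeval_injective.injOn (fun l _ ↦ ⟨X, hδX l⟩) hP

/-- Main theorem (part ii): with `V = ker 𝓛`, where
`L_i = S₀∘P₀⁽ⁱ⁾(∂) + Σ_{λ∈Λ, λ≠0} S_λ∘P_λ⁽ⁱ⁾(D)`, `deg P_λ⁽ⁱ⁾ < m(λ)` and, for every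
`λ ∈ Λ`, the maximum over `i` of the degrees of the `P_λ⁽ⁱ⁾` equals `m(λ) - 1`, the
space `V` is a Mathieu–Zhao space of `k[t]` iff for every nonempty `Λ' ⊆ Λ` there is an
index `i` with `Σ_{λ∈Λ'} P_λ⁽ⁱ⁾(0) ≠ 0`. -/
theorem stmt_14 {k : Type*} [Field k] [IsAlgClosed k] [CharZero k]
    (Λ : Finset k) (hΛ : Λ.Nonempty) (m : k → ℕ) (hm : ∀ l ∈ Λ, 1 ≤ m l)
    (f : Polynomial k) (hf : f = ∏ l ∈ Λ, (X - C l) ^ m l)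
    (d : ℕ) (P : Fin d → k → Polynomial k)
    (hdeg : ∀ i : Fin d, ∀ l ∈ Λ, (P i l).degree < (m l : WithBot ℕ))
    (hmax : ∀ l ∈ Λ, ∃ i : Fin d, (P i l).degree = ((m l - 1 : ℕ) : WithBot ℕ)) :
    IsMZ {g : Polynomial k | ∀ i : Fin d,
        ∑ l ∈ Λ, eval l (opEval (P i l) (if l = 0 then delOp else Dop) g) = 0} ↔
      ∀ Λ' ⊆ Λ, Λ'.Nonempty → ∃ i : Fin d, ∑ l ∈ Λ', (P i l).eval 0 ≠ 0 :=
  stmt_14_general Λ P fun l hl ↦ (hmax l hl).imp fun i hi ↦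
    ⟨ne_zero_of_degree_gt (n := ⊥) (by simp [hi]), Nat.cast_ne_zero.2 (Nat.factorial_ne_zero _)⟩
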